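/- arXiv:2511.07102 — 2 statements merged into one kernel-verified Lean document; each statement's English description precedes it below -/
import Mathlib

section
/- Let E be a complex normed vector space, let U ⊆ E be an open preconnected set, and let f₁, …, f_k : U → ℂ be finitely many functions holomorphic on U. Define L : U → ℝ by L(z) = max_{1 ≤ i ≤ k} Im(f_i z). If L attains its maximum over U at some point z₀ ∈ U, then every index i with Im(f_i z₀) = L(z₀) satisfies that Im(f_i) is constant on U, and consequently L is constant on U. -/
/-!
If `Im (fᵢ z₀) = L z₀`, then `Im fᵢ ≤ L ≤ L z₀ = Im (fᵢ z₀)` on `U`, so `Im fᵢ` itself attains its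
maximum at `z₀`. Since `‖exp (-I * fᵢ)‖ = exp (Im fᵢ)`, the maximum modulus principle on the
preconnected open set `U` makes `Im fᵢ` constant. Some index realizes the finite maximum at `z₀`,
and its constancy gives `L ≥ L z₀` on `U`.
-/

/-- Maximum principle for the maximum of finitely many pluriharmonic functions
`Im (fᵢ)` with `fᵢ` holomorphic on an open preconnected set `U`: if
`L = maxᵢ Im (fᵢ)` attains its maximum over `U` at `z₀ ∈ U`, then every index `i`
realizing the maximum at `z₀` has `Im (fᵢ)` constant on `U`, and `L` is constant on `U`. -/
theorem max_of_im_max_principle {E : Type*} [NormedAddCommGroup E] [NormedSpace ℂ E]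
    {U : Set E} (hU : IsOpen U) (hUc : IsPreconnected U)
    {k : ℕ} (hk : 0 < k) (f : Fin k → E → ℂ)
    (hf : ∀ i, DifferentiableOn ℂ (f i) U)
    (L : E → ℝ) (hL : ∀ z, L z = ⨆ i, (f i z).im)
    {z₀ : E} (hz₀ : z₀ ∈ U) (hmax : ∀ z ∈ U, L z ≤ L z₀) :
    (∀ i, (f i z₀).im = L z₀ → ∀ z ∈ U, (f i z).im = (f i z₀).im) ∧
      (∀ z ∈ U, L z = L z₀) := by
  have : Nonempty (Fin k) := ⟨⟨0, hk⟩⟩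
  have hle : ∀ i z, (f i z).im ≤ L z := fun i z => by
    rw [hL z]
    exact le_ciSup (f := fun i => (f i z).im) (Set.finite_range _).bddAbove i
  have hconst : ∀ i, (f i z₀).im = L z₀ → ∀ z ∈ U, (f i z).im = (f i z₀).im := by
    intro i hi z hz
    have hnorm : ∀ w, ‖Complex.exp (-Complex.I * f i w)‖ = Real.exp (f i w).im := fun w => by
      simp [Complex.norm_exp]
    have hd : DifferentiableOn ℂ (fun w => Complex.exp (-Complex.I * f i w)) U :=
      ((hf i).const_mul _).cexp
    have hm : IsMaxOn (norm ∘ fun w => Complex.exp (-Complex.I * f i w)) U z₀ := by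
      intro w hw
      simp only [Set.mem_ofPred_eq, Function.comp_apply, hnorm]
      exact Real.exp_le_exp.2 (((hle i w).trans (hmax w hw)).trans hi.ge)
    have h := Complex.norm_eqOn_of_isPreconnected_of_isMaxOn hUc hU hd hz₀ hm hz
    simp only [Function.comp_apply, Function.const_apply, hnorm] at h
    exact Real.exp_injective h
  refine ⟨hconst, fun z hz => (hmax z hz).antisymm ?_⟩
  obtain ⟨i, hi⟩ := exists_eq_ciSup_of_finite (f := fun i => (f i z₀).im)
  have hi' : (f i z₀).im = L z₀ := hi.trans (hL z₀).symm
  calc L z₀ = (f i z).im := by rw [hconst i hi' z hz, hi']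
    _ ≤ L z := hle i z
end

section
/- Let E be a complex normed vector space, let U ⊆ E be an open preconnected set, and let L : U → ℝ be continuous. Suppose that for every z ∈ U there exist an open neighborhood V of z with V ⊆ U and finitely many functions f₁, …, f_k : V → ℂ holomorphic on V such that L(w) = max_{1 ≤ i ≤ k} Im(f_i w) for all w ∈ V. If L attains its maximum over U at some point z₀ ∈ U, then L is constant on U. -/
/-!
Let `M = L z₀` and consider the set of points of `U` where `L = M`. It is relatively closed in `U`
because `L` is continuous. It is also open: if `L z = M`, the finite maximum at `z` is attained by
some `fᵢ`, and `Im fᵢ ≤ L ≤ M` near `z` with equality at `z`, so the maximum principle for `Im fᵢ`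
(`im_eventually_eq_of_isLocalMax`) gives `M = Im fᵢ ≤ L ≤ M` near `z`. Since `U` is preconnected,
this set is all of `U`.
-/

open Filter Topology

/-- Local maximum principle for the imaginary part of a holomorphic function, obtained from the
maximum modulus principle applied to `exp (-i f)`, whose modulus is `exp (Im f)`. -/
theorem im_eventually_eq_of_isLocalMax {E : Type*} [NormedAddCommGroup E] [NormedSpace ℂ E]
    {f : E → ℂ} {c : E} (hd : ∀ᶠ z in 𝓝 c, DifferentiableAt ℂ f z)
    (hc : IsLocalMax (fun z => (f z).im) c) : ∀ᶠ y in 𝓝 c, (f y).im = (f c).im := by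
  have hnorm : ∀ z, ‖Complex.exp (-Complex.I * f z)‖ = Real.exp (f z).im := by
    intro z
    simp [Complex.norm_exp]
  have key := Complex.norm_eventually_eq_of_isLocalMax
    (f := fun z => Complex.exp (-Complex.I * f z)) (c := c)
    (hd.mono fun z hz => (hz.const_mul _).cexp)
    (by
      filter_upwards [hc] with z hz
      simpa only [Function.comp_apply, hnorm, Real.exp_le_exp] using hz)
  filter_upwards [key] with y hy
  simpa only [hnorm, Real.exp_eq_exp] using hy

/-- Maximum principle for a continuous function on an open preconnected set `U`
which is locally the maximum of finitely many pluriharmonic functions `Im (fᵢ)`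
(with `fᵢ` holomorphic): if it attains its maximum over `U`, it is constant on `U`. -/
theorem locally_max_im_max_principle {E : Type*} [NormedAddCommGroup E] [NormedSpace ℂ E]
    {U : Set E} (hU : IsOpen U) (hUc : IsPreconnected U)
    {L : E → ℝ} (hL : ContinuousOn L U)
    (hloc : ∀ z ∈ U, ∃ V : Set E, IsOpen V ∧ z ∈ V ∧ V ⊆ U ∧
      ∃ k : ℕ, 0 < k ∧ ∃ f : Fin k → E → ℂ,
        (∀ i, DifferentiableOn ℂ (f i) V) ∧
        ∀ w ∈ V, L w = ⨆ i, (f i w).im)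
    {z₀ : E} (hz₀ : z₀ ∈ U) (hmax : ∀ z ∈ U, L z ≤ L z₀) :
    ∀ z ∈ U, L z = L z₀ := by
  set S : Set E := {z | z ∈ U ∧ L z = L z₀} with hS
  have hSo : IsOpen S := by
    rw [isOpen_iff_mem_nhds]
    rintro z ⟨hzU, hzM⟩
    obtain ⟨V, hV, hzV, hVU, k, hk, f, hf, hLf⟩ := hloc z hzU
    haveI : Nonempty (Fin k) := ⟨⟨0, hk⟩⟩
    have hle : ∀ i, ∀ w ∈ V, (f i w).im ≤ L w := fun i w hw => by
      rw [hLf w hw]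
      exact le_ciSup (f := fun i => (f i w).im) (Set.finite_range _).bddAbove i
    obtain ⟨i, hi⟩ := exists_eq_ciSup_of_finite (f := fun i => (f i z).im)
    have hi' : (f i z).im = L z₀ := by rw [← hzM, hLf z hzV]; exact hi
    have hVn : ∀ᶠ w in 𝓝 z, w ∈ V := hV.mem_nhds hzV
    have hconst : ∀ᶠ w in 𝓝 z, (f i w).im = (f i z).im := by
      apply im_eventually_eq_of_isLocalMax
      · filter_upwards [hVn] with w hw
        exact (hf i).differentiableAt (hV.mem_nhds hw)
      · filter_upwards [hVn] with w hw
        exact ((hle i w hw).trans (hmax w (hVU hw))).trans hi'.ge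
    filter_upwards [hVn, hconst] with w hw hwi
    exact ⟨hVU hw, le_antisymm (hmax w (hVU hw)) ((hwi.trans hi').ge.trans (hle i w hw))⟩
  have hsub : U ⊆ S := by
    refine hUc.subset_of_closure_inter_subset hSo ⟨z₀, hz₀, hz₀, rfl⟩ ?_
    rintro z ⟨hzS, hzU⟩
    refine ⟨hzU, ?_⟩
    have hz : L z ∈ closure {L z₀} :=
      (hL.continuousAt (hU.mem_nhds hzU)).continuousWithinAt.mem_closure hzS fun w hw => hw.2
    simpa using hz
  exact fun z hz => (hsub hz).2
end
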